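/- arXiv:1609.06288 — 2 statements merged into one kernel-verified Lean document; each statement's English description precedes it below -/
import Mathlib

section
/- Let A and B be two nontrivial, finitely generated groups. There exists no left-invariant linear order on the free product G = A * B whose positive cone {g ∈ G : 1 < g} is finitely generated as a subsemigroup of G. -/
/-!
The set `W` of elements of `A ∗ B` whose normal form starts with a letter of `A` is right almost
invariant: right multiplication by a fixed element changes membership in `W` for only finitely
many elements. If the positive cone is generated by a finite set `F`, then beyond some `m` right
multiplication by the elements of `F` preserves `W`, and since every larger element is `m` times a
product of elements of `F`, membership in `W` is constant beyond `m`. This is absurd, because left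
multiplication by an element of the group preserves being far up in the order, whereas a
nontrivial `b ∈ B` moves `W` off itself and a nontrivial `a ∈ A` moves the complement of `W` into
`W`.
-/

open Filter Monoid

universe u v

section AlmostInvariant

variable {G H : Type*} [Group G] [Group H]

/-- Right almost invariant sets in the sense of the theory of ends of groups: each right translate
of `W` differs from `W` by a finite set. -/
def IsRightAlmostInvariant (W : Set G) : Prop :=
  ∀ g : G, ∀ᶠ x in cofinite, x * g ∈ W ↔ x ∈ W

theorem IsRightAlmostInvariant.preimage {W : Set H} (hW : IsRightAlmostInvariant W) {φ : G →* H}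
    (hφ : Function.Injective φ) : IsRightAlmostInvariant (φ ⁻¹' W) := by
  intro g
  filter_upwards [hφ.tendsto_cofinite.eventually (hW (φ g))] with x hx
  simpa only [Set.mem_preimage, map_mul] using hx

end AlmostInvariant

section LeftOrder

variable {G : Type*} [Group G] [LinearOrder G] [MulLeftMono G]

theorem noMaxOrder_of_nontrivial_of_mulLeftMono [Nontrivial G] : NoMaxOrder G := by
  obtain ⟨p, hp⟩ : ∃ p : G, 1 < p := by
    obtain ⟨g, hg⟩ := exists_ne (1 : G)
    rcases hg.lt_or_gt with hg | hg
    · exact ⟨g⁻¹, Left.one_lt_inv_iff.2 hg⟩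
    · exact ⟨g, hg⟩
  exact ⟨fun x => ⟨x * p, lt_mul_of_one_lt_right' x hp⟩⟩

theorem mul_mem_iff_of_mem_closure {F W : Set G} {m : G} (hF : ∀ f ∈ F, 1 ≤ f)
    (hm : ∀ x ≥ m, ∀ f ∈ F, (x * f ∈ W ↔ x ∈ W)) {q : G} (hq : q ∈ Subsemigroup.closure F) :
    ∀ x ≥ m, (x * q ∈ W ↔ x ∈ W) := by
  suffices h : 1 ≤ q ∧ ∀ x ≥ m, (x * q ∈ W ↔ x ∈ W) from h.2
  induction hq using Subsemigroup.closure_induction with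
  | mem f hf => exact ⟨hF f hf, fun x hx => hm x hx f hf⟩
  | mul g h _ _ ihg ihh =>
    refine ⟨one_le_mul ihg.1 ihh.1, fun x hx => ?_⟩
    have hxg : m ≤ x * g := hx.trans (le_mul_of_one_le_right' ihg.1)
    rw [← mul_assoc, ihh.2 _ hxg, ihg.2 x hx]

theorem IsRightAlmostInvariant.eventuallyConst_atTop [NoMaxOrder G] {W F : Set G}
    (hW : IsRightAlmostInvariant W) (hFin : F.Finite)
    (hF : (Subsemigroup.closure F : Set G) = Set.Ioi 1) : EventuallyConst W atTop := by
  have hstep : ∀ᶠ x in atTop, ∀ f ∈ F, (x * f ∈ W ↔ x ∈ W) :=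
    (eventually_all_finite hFin).2 fun f _ => atTop_le_cofinite (hW f)
  obtain ⟨m, hm⟩ := eventually_atTop.1 hstep
  have hFpos : ∀ f ∈ F, 1 ≤ f := fun f hf =>
    (hF.subset (Subsemigroup.subset_closure hf) : 1 < f).le
  have hconst : ∀ x > m, (x ∈ W ↔ m ∈ W) := by
    intro x hx
    have hq : m⁻¹ * x ∈ Subsemigroup.closure F := hF.superset (lt_inv_mul_iff_lt.2 hx)
    simpa only [mul_inv_cancel_left] using mul_mem_iff_of_mem_closure hFpos hm hq m le_rfl
  rw [eventuallyConst_set]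
  by_cases hmW : m ∈ W
  · exact .inl ((eventually_gt_atTop m).mono fun x hx => (hconst x hx).2 hmW)
  · exact .inr ((eventually_gt_atTop m).mono fun x hx => mt (hconst x hx).1 hmW)

theorem not_eventuallyConst_atTop_of_mul {W : Set G} {a b : G} (ha : ∀ x ∉ W, a * x ∈ W)
    (hb : ∀ x ∈ W, b * x ∉ W) : ¬ EventuallyConst W atTop := by
  have tendsto_mul (g : G) : Tendsto (g * ·) atTop atTop := (OrderIso.mulLeft g).tendsto_atTop
  rw [eventuallyConst_set]
  rintro (h | h)
  · obtain ⟨x, hx, hbx⟩ := (h.and ((tendsto_mul b).eventually h)).exists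
    exact hb x hx hbx
  · obtain ⟨x, hx, hax⟩ := (h.and ((tendsto_mul a).eventually h)).exists
    exact hax (ha x hx)

end LeftOrder

section FirstIndex

variable {ι : Type*} {M : ι → Type*} [∀ i, Group (M i)]

theorem word_prod_surjective :
    Function.Surjective (CoprodI.Word.prod : CoprodI.Word M → CoprodI M) := by
  classical
  exact CoprodI.Word.equiv.symm.surjective

open Classical in
/-- The index of the factor containing the first letter of the normal form of an element of a free
product; it is `none` exactly at the identity. -/
noncomputable def firstIdx (x : CoprodI M) : Option ι :=
  (CoprodI.Word.equiv x).fstIdx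

theorem firstIdx_prod (w : CoprodI.Word M) : firstIdx w.prod = w.fstIdx := by
  classical
  exact congrArg CoprodI.Word.fstIdx (CoprodI.Word.equiv.apply_symm_apply w)

theorem firstIdx_one : firstIdx (1 : CoprodI M) = none := by
  rw [← CoprodI.Word.prod_empty, firstIdx_prod]
  rfl

theorem firstIdx_of_mul {i : ι} {m : M i} (hm : m ≠ 1) {x : CoprodI M}
    (hx : firstIdx x ≠ some i) : firstIdx (CoprodI.of m * x) = some i := by
  obtain ⟨w, rfl⟩ := word_prod_surjective x
  rw [firstIdx_prod] at hx
  rw [← CoprodI.Word.prod_cons i m w hm hx, firstIdx_prod, CoprodI.Word.fstIdx_cons]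

theorem firstIdx_of {i : ι} {m : M i} (hm : m ≠ 1) :
    firstIdx (CoprodI.of m : CoprodI M) = some i := by
  simpa only [mul_one] using firstIdx_of_mul hm (x := 1) (by simp [firstIdx_one])

theorem firstIdx_of_ne {i j : ι} (hij : i ≠ j) (m : M j) :
    firstIdx (CoprodI.of m : CoprodI M) ≠ some i := by
  by_cases hm : m = 1
  · simp [hm, firstIdx_one]
  · simpa [firstIdx_of hm] using hij.symm

theorem firstIdx_mul_of {j : ι} (a : M j) {x : CoprodI M} (hx₁ : x ≠ 1)
    (hxa : x ≠ CoprodI.of a⁻¹) : firstIdx (x * CoprodI.of a) = firstIdx x := by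
  obtain ⟨w, rfl⟩ := word_prod_surjective x
  induction w using CoprodI.Word.consRecOn with
  | empty => exact absurd CoprodI.Word.prod_empty hx₁
  | cons i m w hi hm ih =>
    rw [← firstIdx_prod] at hi
    rw [CoprodI.Word.prod_cons] at hxa ⊢
    rw [firstIdx_of_mul hm hi, mul_assoc]
    by_cases hw : w.prod = 1
    · rw [hw, mul_one] at hxa
      rw [hw, one_mul]
      rcases eq_or_ne i j with rfl | hij
      · have hma : m * a ≠ 1 := fun h => hxa (congrArg _ (eq_inv_of_mul_eq_one_left h))
        rw [← map_mul, firstIdx_of hma]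
      · exact firstIdx_of_mul hm (firstIdx_of_ne hij a)
    · refine firstIdx_of_mul hm ?_
      by_cases hwa : w.prod = CoprodI.of a⁻¹
      · simp [hwa, firstIdx_one]
      · rwa [ih hw hwa]

theorem isRightAlmostInvariant_firstIdx_eq (o : Option ι) :
    IsRightAlmostInvariant {x : CoprodI M | firstIdx x = o} := by
  intro g
  induction g using CoprodI.induction_on with
  | one => simp
  | of j a =>
    have hfin : ({1, CoprodI.of a⁻¹} : Set (CoprodI M)).Finite := Set.toFinite _
    filter_upwards [hfin.compl_mem_cofinite] with x hx
    simp only [Set.mem_compl_iff, Set.mem_insert_iff, Set.mem_singleton_iff, not_or] at hx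
    change firstIdx (x * CoprodI.of a) = o ↔ firstIdx x = o
    rw [firstIdx_mul_of a hx.1 hx.2]
  | mul g h hg hh =>
    filter_upwards [hg, (mul_left_injective g).tendsto_cofinite.eventually hh] with x hxg hxgh
    rw [← mul_assoc, hxgh, hxg]

end FirstIndex

section Coprod

variable (A : Type u) (B : Type v) [Group A] [Group B]

/-- The family with the two members `A` and `B`, lifted to a common universe. -/
def PairFamily : Bool → Type (max u v)
  | true => ULift.{v} A
  | false => ULift.{u} B

instance PairFamily.instGroup : ∀ i, Group (PairFamily A B i)
  | true => inferInstanceAs (Group (ULift A))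
  | false => inferInstanceAs (Group (ULift B))

/-- The comparison map from the binary free product to the indexed free product, for which Mathlib
provides normal forms. -/
def coprodToCoprodI : Coprod A B →* CoprodI (PairFamily A B) :=
  Coprod.lift
    ((CoprodI.of (M := PairFamily A B) (i := true)).comp MulEquiv.ulift.symm.toMonoidHom)
    ((CoprodI.of (M := PairFamily A B) (i := false)).comp MulEquiv.ulift.symm.toMonoidHom)

theorem coprodToCoprodI_injective : Function.Injective (coprodToCoprodI A B) := by
  let inclusion : ∀ i, PairFamily A B i →* Coprod A B
    | true => Coprod.inl.comp MulEquiv.ulift.toMonoidHom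
    | false => Coprod.inr.comp MulEquiv.ulift.toMonoidHom
  have hleft : (CoprodI.lift inclusion).comp (coprodToCoprodI A B) = MonoidHom.id _ := by
    ext x
    · exact CoprodI.lift_of inclusion (i := true) (ULift.up x)
    · exact CoprodI.lift_of inclusion (i := false) (ULift.up x)
  exact Function.LeftInverse.injective (DFunLike.congr_fun hleft)

variable {A B}

theorem firstIdx_coprodToCoprodI_inl_mul {a : A} (ha : a ≠ 1) {x : Coprod A B}
    (hx : firstIdx (coprodToCoprodI A B x) ≠ some true) :
    firstIdx (coprodToCoprodI A B (Coprod.inl a * x)) = some true := by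
  rw [map_mul]
  exact firstIdx_of_mul (M := PairFamily A B) (i := true) (fun h => ha (ULift.up_injective h)) hx

theorem firstIdx_coprodToCoprodI_inr_mul {b : B} (hb : b ≠ 1) {x : Coprod A B}
    (hx : firstIdx (coprodToCoprodI A B x) ≠ some false) :
    firstIdx (coprodToCoprodI A B (Coprod.inr b * x)) = some false := by
  rw [map_mul]
  exact firstIdx_of_mul (M := PairFamily A B) (i := false) (fun h => hb (ULift.up_injective h)) hx

end Coprod

theorem no_finitely_generated_positive_cone_in_free_product_general
    {A : Type u} {B : Type v} [Group A] [Group B] [Nontrivial A] [Nontrivial B]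
    [LinearOrder (Coprod A B)] [MulLeftMono (Coprod A B)]
    {F : Set (Coprod A B)} (hFin : F.Finite) :
    (Subsemigroup.closure F : Set (Coprod A B)) ≠ Set.Ioi 1 := by
  intro hF
  let W : Set (Coprod A B) := coprodToCoprodI A B ⁻¹' {x | firstIdx x = some true}
  have hW : IsRightAlmostInvariant W :=
    (isRightAlmostInvariant_firstIdx_eq _).preimage (coprodToCoprodI_injective A B)
  have : Nontrivial (Coprod A B) := Coprod.inl_injective.nontrivial
  have : NoMaxOrder (Coprod A B) := noMaxOrder_of_nontrivial_of_mulLeftMono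
  obtain ⟨a, ha⟩ := exists_ne (1 : A)
  obtain ⟨b, hb⟩ := exists_ne (1 : B)
  have haW : ∀ x ∉ W, Coprod.inl a * x ∈ W := fun _ =>
    firstIdx_coprodToCoprodI_inl_mul ha
  have hbW : ∀ x ∈ W, Coprod.inr b * x ∉ W := by
    intro x (hx : firstIdx (coprodToCoprodI A B x) = some true) hbx
    have hb_first := firstIdx_coprodToCoprodI_inr_mul hb (x := x) (by simp [hx])
    exact Bool.false_ne_true (Option.some.inj (hb_first.symm.trans hbx))
  exact not_eventuallyConst_atTop_of_mul haW hbW (hW.eventuallyConst_atTop hFin hF)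

/-- **No positive cone in a free product is finitely generated as a semigroup.**
Let `A` and `B` be nontrivial, finitely generated groups.  For every left-invariant
linear order on `G = A ∗ B`, there is no finite subset `F` of the positive cone
`{g : 1 < g}` whose generated subsemigroup is the whole positive cone. -/
theorem no_finitely_generated_positive_cone_in_free_product
    {A B : Type} [Group A] [Group B] [Nontrivial A] [Nontrivial B]
    (hA : Group.FG A) (hB : Group.FG B)
    (lin : LinearOrder (Monoid.Coprod A B))
    (hlin : ∀ h g g' : Monoid.Coprod A B, lin.le g g' → lin.le (h * g) (h * g')) :
    ¬ ∃ F : Finset (Monoid.Coprod A B),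
        ((Subsemigroup.closure (F : Set (Monoid.Coprod A B)) :
            Subsemigroup (Monoid.Coprod A B)) : Set (Monoid.Coprod A B)) =
          {g : Monoid.Coprod A B | lin.lt 1 g} := by
  rintro ⟨F, hF⟩
  have : MulLeftMono (Monoid.Coprod A B) := ⟨hlin⟩
  exact no_finitely_generated_positive_cone_in_free_product_general F.finite_toSet hF
end

section
/- Let A and B be nontrivial groups generated by the images of finite sets Y_A and Y_B respectively, let G = A * B, let X = Y_A ⊔ Y_B ⊔ Y_A⁻¹ ⊔ Y_B⁻¹, and let φ : X* → G be a monoid homomorphism with φ(x⁻¹) = φ(x)⁻¹ for all x ∈ X. If w ∈ X* and φ(w) has reduced factorization φ(w) = a₁b₁⋯aₘbₘ in the free product A * B, then for every index i, each of the elements a₁b₁⋯aᵢ and a₁b₁⋯aᵢbᵢ of A * B is represented by some prefix of the word w; i.e., every truncation of the reduced factorization of φ(w) at a syllable boundary lies in φ(Pref({w})). -/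
/-- The element `a₁b₁⋯aₘbₘ` of the free product `A ∗ B` determined by a list of
pairs `[(a₁,b₁),…,(aₘ,bₘ)]`. -/
def altProd {A B : Type} [Group A] [Group B] (l : List (A × B)) : Monoid.Coprod A B :=
  (l.map fun p => Monoid.Coprod.inl p.1 * Monoid.Coprod.inr p.2).prod

/-- The list `[(a₁,b₁),…,(aₘ,bₘ)]` encodes a reduced factorization
`a₁b₁⋯aₘbₘ`: all `aᵢ` with `i ≥ 2` are nontrivial and all `bᵢ` with
`i ≤ m − 1` are nontrivial (while `a₁` and `bₘ` are arbitrary). -/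
def IsReducedFactorization {A B : Type} [Group A] [Group B] (l : List (A × B)) : Prop :=
  (∀ p ∈ l.tail, p.1 ≠ 1) ∧ (∀ p ∈ l.dropLast, p.2 ≠ 1)

/-!
For `g` in a free product of groups, look at the factor containing the first syllable of the reduced
form of `g`. Multiplying `g` on the right by one syllable cannot change this factor unless the
product or `g` itself is trivial. Hence a path in the Cayley graph from `u⁻¹` to `v` whose endpoints
start in different factors passes through `1`. If `φ w = u * v` without cancellation between `u` and
`v`, then the path `u⁻¹ * φ w'`, with `w'` running over the prefixes of `w`, is such a path, so
`φ w' = u` for some `w'`.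
-/

open Monoid

section FirstIndex

variable {ι : Type*} {M : ι → Type*} [∀ i, Monoid (M i)]

open Classical in
/-- The index of the factor containing the first syllable of the reduced form of `g`, and `none` for
`g = 1`. -/
noncomputable def firstIndex (g : CoprodI M) : Option ι :=
  (CoprodI.Word.equiv g).fstIdx

theorem firstIndex_prod (w : CoprodI.Word M) : firstIndex w.prod = w.fstIdx := by
  classical
  exact congrArg CoprodI.Word.fstIdx (CoprodI.Word.equiv.apply_symm_apply w)

theorem exists_word_prod_eq (g : CoprodI M) : ∃ w : CoprodI.Word M, w.prod = g := by
  classical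
  exact CoprodI.Word.equiv.symm.surjective g

theorem firstIndex_one : firstIndex (1 : CoprodI M) = none :=
  firstIndex_prod CoprodI.Word.empty

theorem firstIndex_of_mul {i : ι} {m : M i} {g : CoprodI M} (hm : m ≠ 1)
    (hg : firstIndex g ≠ some i) : firstIndex (CoprodI.of m * g) = some i := by
  obtain ⟨w, rfl⟩ := exists_word_prod_eq g
  rw [firstIndex_prod] at hg
  rw [← CoprodI.Word.prod_cons i m w hm hg, firstIndex_prod, CoprodI.Word.fstIdx_cons]

theorem firstIndex_of {i : ι} {m : M i} (hm : m ≠ 1) : firstIndex (CoprodI.of m) = some i := by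
  simpa using firstIndex_of_mul hm (g := 1) (by simp [firstIndex_one])

@[elab_as_elim]
theorem reduced_induction {motive : CoprodI M → Prop} (g : CoprodI M) (one : motive 1)
    (of_mul : ∀ (i : ι) (m : M i) (g : CoprodI M), m ≠ 1 → firstIndex g ≠ some i →
      motive g → motive (CoprodI.of m * g)) : motive g := by
  obtain ⟨w, rfl⟩ := exists_word_prod_eq g
  induction w using CoprodI.Word.consRecOn with
  | empty => exact one
  | cons i m w hw hm ih =>
    rw [CoprodI.Word.prod_cons]
    exact of_mul i m w.prod hm (by rwa [firstIndex_prod]) ih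

theorem firstIndex_eq_none_iff {g : CoprodI M} : firstIndex g = none ↔ g = 1 := by
  refine ⟨fun h => ?_, fun h => h ▸ firstIndex_one⟩
  induction g using reduced_induction with
  | one => rfl
  | of_mul i m g hm hg _ => simp [firstIndex_of_mul hm hg] at h

theorem firstIndex_of_mul_of {i j : ι} {m : M i} {x : M j} (hm : m ≠ 1)
    (h : CoprodI.of m * CoprodI.of x ≠ 1) :
    firstIndex (CoprodI.of m * CoprodI.of x) = some i := by
  by_cases hij : i = j
  · subst hij
    rw [← map_mul] at h ⊢
    exact firstIndex_of fun hmx => h (by rw [hmx, map_one])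
  · by_cases hx : x = 1
    · rw [hx, map_one, mul_one, firstIndex_of hm]
    · exact firstIndex_of_mul hm (by simpa [firstIndex_of hx] using Ne.symm hij)

theorem firstIndex_mul_of {g : CoprodI M} {j : ι} {x : M j} (hg : g ≠ 1)
    (hgx : g * CoprodI.of x ≠ 1) : firstIndex (g * CoprodI.of x) = firstIndex g := by
  induction g using reduced_induction with
  | one => exact absurd rfl hg
  | of_mul i m g hm hgi ih =>
    rw [firstIndex_of_mul hm hgi]
    by_cases hg1 : g = 1
    · subst hg1
      rw [mul_one] at hgx ⊢
      exact firstIndex_of_mul_of hm hgx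
    rw [mul_assoc]
    by_cases hgx1 : g * CoprodI.of x = 1
    · rw [hgx1, mul_one, firstIndex_of hm]
    · exact firstIndex_of_mul hm (by rwa [ih hg1 hgx1])

theorem firstIndex_mul_map_ofList_of_forall_prefix_ne_one {X : Type*}
    {φ : FreeMonoid X →* CoprodI M}
    (hφ : ∀ x, ∃ i, ∃ m : M i, CoprodI.of m = φ (FreeMonoid.of x)) {g : CoprodI M} {w : List X}
    (h : ∀ w', w' <+: w → g * φ (FreeMonoid.ofList w') ≠ 1) :
    firstIndex (g * φ (FreeMonoid.ofList w)) = firstIndex g := by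
  induction w using List.reverseRecOn with
  | nil => simp
  | append_singleton w x ih =>
    obtain ⟨i, m, hm⟩ := hφ x
    have hstep : g * φ (FreeMonoid.ofList (w ++ [x])) =
        g * φ (FreeMonoid.ofList w) * CoprodI.of m := by
      rw [hm, mul_assoc, ← map_mul, FreeMonoid.ofList_append, FreeMonoid.ofList_singleton]
    have hprefix : w <+: w ++ [x] := List.prefix_append w [x]
    have hend := h (w ++ [x]) List.prefix_rfl
    rw [hstep] at hend ⊢
    rw [firstIndex_mul_of (h w hprefix) hend, ih fun w' hw' => h w' (hw'.trans hprefix)]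

end FirstIndex

section Syllables

variable {ι : Type*} {M : ι → Type*}

/-- The element of the free product represented by a list of syllables, where a syllable is an
element of a factor together with the index of that factor. Unlike in `Monoid.CoprodI.Word`, trivial
syllables and adjacent syllables from the same factor are allowed. -/
def syllableProd [∀ i, Monoid (M i)] (L : List (Σ i, M i)) : CoprodI M :=
  (L.map fun x => CoprodI.of x.2).prod

theorem syllableProd_cons [∀ i, Monoid (M i)] (x : Σ i, M i) (L : List (Σ i, M i)) :
    syllableProd (x :: L) = CoprodI.of x.2 * syllableProd L := by
  simp [syllableProd]

theorem syllableProd_append [∀ i, Monoid (M i)] (L L' : List (Σ i, M i)) :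
    syllableProd (L ++ L') = syllableProd L * syllableProd L' := by
  simp [syllableProd]

theorem firstIndex_syllableProd_ne [∀ i, Monoid (M i)] {L : List (Σ i, M i)} {i : ι}
    (hchain : L.IsChain fun x y => x.1 ≠ y.1) (hne : ∀ x ∈ L.dropLast, x.2 ≠ 1)
    (hi : ∀ x ∈ L.head?, x.1 ≠ i) : firstIndex (syllableProd L) ≠ some i := by
  induction L generalizing i with
  | nil => simp [syllableProd, firstIndex_one]
  | cons x L ih =>
    rw [List.isChain_cons] at hchain
    have htail : firstIndex (syllableProd L) ≠ some x.1 :=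
      ih hchain.2 (fun y hy => hne y (by cases L <;> simp_all)) fun y hy => (hchain.1 y hy).symm
    rw [syllableProd_cons]
    by_cases hx : x.2 = 1
    · have hL : L = [] := by
        by_contra hL
        exact hne x (by simp [List.dropLast_cons_of_ne_nil hL]) hx
      simp [hx, hL, syllableProd, firstIndex_one]
    · simpa [firstIndex_of_mul hx htail] using hi x

variable [∀ i, Group (M i)]

theorem syllableProd_inv (L : List (Σ i, M i)) :
    (syllableProd L)⁻¹ = syllableProd (L.reverse.map fun x => ⟨x.1, x.2⁻¹⟩) := by
  simp [syllableProd, List.prod_inv_reverse, Function.comp_def]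

theorem firstIndex_syllableProd_inv_ne {L : List (Σ i, M i)} {i : ι}
    (hchain : L.IsChain fun x y => x.1 ≠ y.1) (hne : ∀ x ∈ L.tail, x.2 ≠ 1)
    (hi : ∀ x ∈ L.getLast?, x.1 ≠ i) : firstIndex (syllableProd L)⁻¹ ≠ some i := by
  rw [syllableProd_inv]
  refine firstIndex_syllableProd_ne ?_ ?_ ?_
  · rw [List.isChain_map, List.isChain_reverse]
    exact hchain.imp fun _ _ => Ne.symm
  · rw [← List.map_dropLast, List.dropLast_reverse, List.forall_mem_map]
    exact fun x hx => inv_ne_one.mpr (hne x (List.mem_reverse.mp hx))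
  · rw [List.head?_map, List.head?_reverse]
    intro y hy
    obtain ⟨x, hx, rfl⟩ := Option.map_eq_some_iff.mp hy
    exact hi x hx

theorem exists_prefix_map_eq_of_firstIndex_ne {X : Type*} {φ : FreeMonoid X →* CoprodI M}
    (hφ : ∀ x, ∃ i, ∃ m : M i, CoprodI.of m = φ (FreeMonoid.of x)) {w : List X}
    {u v : CoprodI M} (hw : φ (FreeMonoid.ofList w) = u * v)
    (huv : firstIndex u⁻¹ ≠ firstIndex v) :
    ∃ w', w' <+: w ∧ φ (FreeMonoid.ofList w') = u := by
  by_contra! h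
  have hconst := firstIndex_mul_map_ofList_of_forall_prefix_ne_one hφ (g := u⁻¹)
    fun w' hw' h1 => h w' hw' (inv_mul_eq_one.mp h1).symm
  rw [hw, inv_mul_cancel_left] at hconst
  exact huv hconst.symm

theorem exists_prefix_map_eq_syllableProd {X : Type*} {φ : FreeMonoid X →* CoprodI M}
    (hφ : ∀ x, ∃ i, ∃ m : M i, CoprodI.of m = φ (FreeMonoid.of x)) {w : List X}
    {L P : List (Σ i, M i)} (hchain : L.IsChain fun x y => x.1 ≠ y.1)
    (hne : ∀ x ∈ L.tail.dropLast, x.2 ≠ 1) (hw : φ (FreeMonoid.ofList w) = syllableProd L)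
    (hP : P <+: L) : ∃ w', w' <+: w ∧ φ (FreeMonoid.ofList w') = syllableProd P := by
  obtain ⟨S, rfl⟩ := hP
  by_cases hP1 : syllableProd P = 1
  · exact ⟨[], List.nil_prefix, by simp [hP1]⟩
  by_cases hS : S = []
  · subst hS
    exact ⟨w, List.prefix_rfl, by simpa using hw⟩
  have hP : P ≠ [] := by
    rintro rfl
    exact hP1 rfl
  rw [List.tail_append_of_ne_nil hP, List.dropLast_append_of_ne_nil hS] at hne
  obtain ⟨hchainP, hchainS, hjoin⟩ := List.isChain_append.mp hchain
  refine exists_prefix_map_eq_of_firstIndex_ne hφ (hw.trans (syllableProd_append P S))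
    fun heq => ?_
  obtain ⟨i, hi⟩ : ∃ i, firstIndex (syllableProd P)⁻¹ = some i :=
    Option.ne_none_iff_exists'.mp (mt firstIndex_eq_none_iff.mp (inv_ne_one.mpr hP1))
  have hlast : ∃ x ∈ P.getLast?, x.1 = i := by
    by_contra! h
    exact firstIndex_syllableProd_inv_ne hchainP (fun x hx => hne x (by simp [hx])) h hi
  have hhead : ∃ y ∈ S.head?, y.1 = i := by
    by_contra! h
    exact firstIndex_syllableProd_ne hchainS (fun x hx => hne x (by simp [hx])) h (heq ▸ hi)
  obtain ⟨x, hx, hxi⟩ := hlast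
  obtain ⟨y, hy, hyi⟩ := hhead
  exact hjoin x hx y hy (hxi.trans hyi.symm)

end Syllables

section BinaryCoproduct

universe u

/-- The two-element family with members `A` and `B`; it presents the binary free product `A ∗ B` as
an indexed one, for which the library has reduced words. -/
abbrev Factor (A B : Type u) : Bool → Type u :=
  Bool.rec A B

instance (A B : Type u) [Group A] [Group B] : ∀ b, Group (Factor A B b) :=
  Bool.rec ‹Group A› ‹Group B›

/-- The canonical isomorphism from the binary free product to the indexed free product of the same
two groups. -/
def coprodEquivCoprodI (A B : Type u) [Group A] [Group B] :
    Coprod A B ≃* CoprodI (Factor A B) :=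
  MonoidHom.toMulEquiv
    (Coprod.lift (CoprodI.of (M := Factor A B) (i := false))
      (CoprodI.of (M := Factor A B) (i := true)))
    (CoprodI.lift (Bool.rec Coprod.inl Coprod.inr))
    (by ext <;> rfl)
    (by ext (_ | _) <;> rfl)

theorem coprodEquivCoprodI_inl {A B : Type u} [Group A] [Group B] (a : A) :
    coprodEquivCoprodI A B (Coprod.inl a) = CoprodI.of (M := Factor A B) (i := false) a :=
  rfl

theorem coprodEquivCoprodI_inr {A B : Type u} [Group A] [Group B] (b : B) :
    coprodEquivCoprodI A B (Coprod.inr b) = CoprodI.of (M := Factor A B) (i := true) b :=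
  rfl

/-- The list `[a₁, b₁, …, aₘ, bₘ]` of syllables of a list of pairs `[(a₁, b₁), …, (aₘ, bₘ)]`. -/
def syllables {A B : Type u} (l : List (A × B)) : List (Σ b, Factor A B b) :=
  l.flatMap fun p => [⟨false, p.1⟩, ⟨true, p.2⟩]

theorem syllables_cons {A B : Type u} (p : A × B) (l : List (A × B)) :
    syllables (p :: l) = ⟨false, p.1⟩ :: ⟨true, p.2⟩ :: syllables l :=
  rfl

theorem syllables_append {A B : Type u} (l l' : List (A × B)) :
    syllables (l ++ l') = syllables l ++ syllables l' :=
  List.flatMap_append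

theorem isChain_syllables {A B : Type u} (l : List (A × B)) :
    (syllables l).IsChain fun x y => x.1 ≠ y.1 := by
  induction l with
  | nil => exact List.isChain_nil
  | cons p l ih =>
    cases l with
    | nil => simp [syllables]
    | cons q l => simpa [syllables_cons] using ih

theorem altProd_cons {A B : Type} [Group A] [Group B] (p : A × B) (l : List (A × B)) :
    altProd (p :: l) = Coprod.inl p.1 * Coprod.inr p.2 * altProd l :=
  rfl

theorem syllableProd_syllables {A B : Type} [Group A] [Group B] (l : List (A × B)) :
    syllableProd (syllables l) = coprodEquivCoprodI A B (altProd l) := by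
  induction l with
  | nil => simp [syllables, syllableProd, altProd]
  | cons p l ih =>
    rw [syllables_cons, syllableProd_cons, syllableProd_cons, ih, altProd_cons, map_mul, map_mul,
      coprodEquivCoprodI_inl, coprodEquivCoprodI_inr, mul_assoc]

theorem IsReducedFactorization.ne_one_of_mem_tail_dropLast_syllables
    {A B : Type} [Group A] [Group B] {l : List (A × B)} (hl : IsReducedFactorization l) :
    ∀ x ∈ (syllables l).tail.dropLast, x.2 ≠ 1 := by
  obtain ⟨hA, hB⟩ := hl
  cases l with
  | nil => simp [syllables]
  | cons p l =>
    rw [List.tail_cons] at hA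
    rw [syllables_cons, List.tail_cons]
    induction l generalizing p with
    | nil => simp [syllables]
    | cons q l ih =>
      rw [List.dropLast_cons_cons, List.forall_mem_cons] at hB
      rw [List.forall_mem_cons] at hA
      rw [syllables_cons, List.dropLast_cons_cons, List.dropLast_cons_cons, List.forall_mem_cons,
        List.forall_mem_cons]
      exact ⟨hB.1, hA.1, ih q hA.2 hB.2⟩

end BinaryCoproduct

theorem exists_prefix_map_eq_of_syllables_prefix {A B : Type} [Group A] [Group B] {X : Type*}
    {φ : FreeMonoid X →* Coprod A B}
    (hφ : ∀ x, φ (FreeMonoid.of x) ∈ (Coprod.inl : A →* Coprod A B).range ∨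
      φ (FreeMonoid.of x) ∈ (Coprod.inr : B →* Coprod A B).range)
    {w : List X} {l : List (A × B)} (hl : IsReducedFactorization l)
    (hw : φ (FreeMonoid.ofList w) = altProd l) {g : Coprod A B} {P : List (Σ b, Factor A B b)}
    (hP : P <+: syllables l) (hg : syllableProd P = coprodEquivCoprodI A B g) :
    ∃ w', w' <+: w ∧ φ (FreeMonoid.ofList w') = g := by
  let e := coprodEquivCoprodI A B
  have hletter : ∀ x, ∃ i, ∃ m : Factor A B i,
      CoprodI.of m = (e : Coprod A B →* CoprodI (Factor A B)).comp φ (FreeMonoid.of x) := by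
    intro x
    obtain ⟨a, ha⟩ | ⟨b, hb⟩ := hφ x
    · exact ⟨false, a, congrArg e ha⟩
    · exact ⟨true, b, congrArg e hb⟩
  obtain ⟨w', hw', h⟩ := exists_prefix_map_eq_syllableProd hletter (isChain_syllables l)
    hl.ne_one_of_mem_tail_dropLast_syllables
    ((congrArg e hw).trans (syllableProd_syllables l).symm) hP
  exact ⟨w', hw', e.injective (h.trans hg)⟩

theorem map_of_mem_or_mem {G YA YB : Type*} [Group G] {H K : Subgroup G}
    {φ : FreeMonoid ((YA ⊕ YB) × Bool) →* G}
    (hH : ∀ y, φ (FreeMonoid.of (Sum.inl y, true)) ∈ H)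
    (hK : ∀ y, φ (FreeMonoid.of (Sum.inr y, true)) ∈ K)
    (hφinv : ∀ s b, φ (FreeMonoid.of (s, !b)) = (φ (FreeMonoid.of (s, b)))⁻¹)
    (x : (YA ⊕ YB) × Bool) : φ (FreeMonoid.of x) ∈ H ∨ φ (FreeMonoid.of x) ∈ K := by
  have hfalse (s : YA ⊕ YB) : φ (FreeMonoid.of (s, false)) = (φ (FreeMonoid.of (s, true)))⁻¹ :=
    hφinv s true
  obtain ⟨y | y, _ | _⟩ := x
  · exact Or.inl (hfalse _ ▸ inv_mem (hH y))
  · exact Or.inl (hH y)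
  · exact Or.inr (hfalse _ ▸ inv_mem (hK y))
  · exact Or.inr (hK y)

theorem truncations_of_reduced_factorization_are_represented_by_prefixes_general
    {A B : Type} [Group A] [Group B] {X : Type*} (φ : FreeMonoid X →* Coprod A B)
    (hφ : ∀ x, φ (FreeMonoid.of x) ∈ (Coprod.inl : A →* Coprod A B).range ∨
      φ (FreeMonoid.of x) ∈ (Coprod.inr : B →* Coprod A B).range)
    (w : List X) (l : List (A × B)) (hl : IsReducedFactorization l)
    (hw : φ (FreeMonoid.ofList w) = altProd l) (i : ℕ) (hi : i < l.length) :
    (∃ w' : List X, w' <+: w ∧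
      φ (FreeMonoid.ofList w') = altProd (l.take i) * Coprod.inl l[i].1) ∧
    (∃ w'' : List X, w'' <+: w ∧ φ (FreeMonoid.ofList w'') = altProd (l.take (i + 1))) := by
  have hprefix : syllables (l.take (i + 1)) <+: syllables l :=
    ⟨syllables (l.drop (i + 1)), by rw [← syllables_append, List.take_append_drop]⟩
  have hprefix_half : syllables (l.take i) ++ [⟨false, l[i].1⟩] <+: syllables (l.take (i + 1)) := by
    rw [← List.take_concat_get' l i hi, syllables_append]
    exact ⟨[⟨true, l[i].2⟩], List.append_assoc _ _ _⟩
  constructor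
  · refine exists_prefix_map_eq_of_syllables_prefix hφ hl hw (hprefix_half.trans hprefix) ?_
    rw [syllableProd_append, syllableProd_syllables, map_mul, coprodEquivCoprodI_inl]
    simp [syllableProd]
  · exact exists_prefix_map_eq_of_syllables_prefix hφ hl hw hprefix (syllableProd_syllables _)

/-- If `φ : X* → A ∗ B` (where `X = Y_A ⊔ Y_B ⊔ Y_A⁻¹ ⊔ Y_B⁻¹`, realized as
`(Y_A ⊕ Y_B) × Bool`) respects formal inverses and sends the letters of `Y_A`,
`Y_B` to generators of `A`, `B`, and if `φ(w)` has reduced factorization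
`a₁b₁⋯aₘbₘ`, then every truncation `a₁b₁⋯aᵢ` and `a₁b₁⋯aᵢbᵢ` of this
factorization at a syllable boundary is represented by a prefix of `w`. -/
theorem truncations_of_reduced_factorization_are_represented_by_prefixes
    {A B : Type} [Group A] [Group B] [Nontrivial A] [Nontrivial B]
    {YA YB : Type} [Fintype YA] [Fintype YB]
    (genA : YA → A) (genB : YB → B)
    (hgenA : Subgroup.closure (Set.range genA) = ⊤)
    (hgenB : Subgroup.closure (Set.range genB) = ⊤)
    (φ : FreeMonoid ((YA ⊕ YB) × Bool) →* Monoid.Coprod A B)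
    (hφA : ∀ y : YA, φ (FreeMonoid.of (Sum.inl y, true)) = Monoid.Coprod.inl (genA y))
    (hφB : ∀ y : YB, φ (FreeMonoid.of (Sum.inr y, true)) = Monoid.Coprod.inr (genB y))
    (hφinv : ∀ (s : YA ⊕ YB) (b : Bool),
      φ (FreeMonoid.of (s, !b)) = (φ (FreeMonoid.of (s, b)))⁻¹)
    (w : List ((YA ⊕ YB) × Bool)) (l : List (A × B))
    (hl : IsReducedFactorization l)
    (hw : φ (FreeMonoid.ofList w) = altProd l) :
    ∀ (i : ℕ) (hi : i < l.length),
      (∃ w' : List ((YA ⊕ YB) × Bool), w' <+: w ∧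
        φ (FreeMonoid.ofList w') =
          altProd (l.take i) * Monoid.Coprod.inl (l.get ⟨i, hi⟩).1) ∧
      (∃ w'' : List ((YA ⊕ YB) × Bool), w'' <+: w ∧
        φ (FreeMonoid.ofList w'') = altProd (l.take (i + 1))) := by
  exact truncations_of_reduced_factorization_are_represented_by_prefixes_general φ
    (map_of_mem_or_mem (fun y => ⟨genA y, (hφA y).symm⟩) (fun y => ⟨genB y, (hφB y).symm⟩) hφinv)
    w l hl hw
end
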